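/- arXiv:1805.06581 — 2 statements merged into one kernel-verified Lean document; each statement's English description precedes it below -/
import Mathlib

section
/- Let w be a fully commutative element of a Coxeter group and suppose w has a reduced word of the form s t w' with l(w) = l(w') + 2 and m(s,t) ≥ 3. Then in the coset decomposition w = w_I · ᴵw with respect to I = {s,t}, the factor w_I is not the longest element of W_I; consequently w lies in a left {s,t}-string and the lower left star operation applied to w yields t w' (i.e., it removes the leftmost letter s). -/
open CoxeterSystem

def CommStep {B : Type*} (M : CoxeterMatrix B) (l l' : List B) : Prop :=
  ∃ (u v : List B) (a b : B), M a b = 2 ∧ l = u ++ a :: b :: v ∧ l' = u ++ b :: a :: v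

def CommEquiv {B : Type*} (M : CoxeterMatrix B) : List B → List B → Prop :=
  Relation.ReflTransGen fun l l' => CommStep M l l' ∨ CommStep M l' l

def FullyCommutative {B W : Type*} [Group W] {M : CoxeterMatrix B}
    (cs : CoxeterSystem M W) (w : W) : Prop :=
  ∀ l l', cs.IsReduced l → cs.wordProd l = w → cs.IsReduced l' → cs.wordProd l' = w →
    CommEquiv M l l'

/-- `u` is the factor `w_I` in the coset decomposition `x = w_I · ᴵx` with respect to the
set of generators `I`: it lies in the parabolic subgroup `W_I`, its complement `u⁻¹ * x`
has no left descent in `I`, and lengths are additive. -/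
def CosetFactor {B W : Type*} [Group W] {M : CoxeterMatrix B}
    (cs : CoxeterSystem M W) (I : Set B) (u x : W) : Prop :=
  u ∈ Subgroup.closure (cs.simple '' I) ∧
  (∀ i ∈ I, ¬ cs.IsLeftDescent (u⁻¹ * x) i) ∧
  cs.length x = cs.length u + cs.length (u⁻¹ * x)

/-!
The parity of the number of occurrences of a reflection in the inversion sequence of a word depends
only on the product of the word: it is the sign picked up by a root under the action of the product.
It detects right descents, which gives the exchange condition, and hence every element of a standard
parabolic subgroup `W_I` has a reduced word with letters in `I`.

Commutation moves preserve the subword of letters in `{a, b}` when `m(a, b) ≠ 2`, so any two left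
descents of a fully commutative element commute; as `a` is a descent of `w`, `b` is not. On the
other hand, `s_b` occurs `m / o` times in the inversion sequence of the braid word of length
`m = m(a, b)`, where `o` is the order of `s_a s_b`. If `m / o` is odd, then `b` is a descent of the
braid element; if it is even, then the braid element is `1`. In neither case can it be `w_I`. Not
using `o = m` avoids the geometric representation.

A factor `w_I` of length at most `1` is `1`, `s_a` or `s_b`; the first two contradict the descents
`a` of `w` and `b` of `s_a w`, and the last would make `b` a descent of `w`.
-/

section

open List

theorem CommStep.filter_eq {B : Type*} [DecidableEq B] {M : CoxeterMatrix B} {a b : B}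
    (hab : M a b ≠ 2) {l l' : List B} (h : CommStep M l l') :
    l.filter (fun x ↦ x = a ∨ x = b) = l'.filter (fun x ↦ x = a ∨ x = b) := by
  obtain ⟨u, v, c, d, hcd, rfl, rfl⟩ := h
  have not_both : ¬ ((c = a ∨ c = b) ∧ (d = a ∨ d = b)) := by
    rintro ⟨rfl | rfl, rfl | rfl⟩
    · simp at hcd
    · exact hab hcd
    · exact hab (M.symmetric _ _ ▸ hcd)
    · simp at hcd
  simp only [filter_append, filter_cons]
  by_cases hc : c = a ∨ c = b <;> by_cases hd : d = a ∨ d = b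
  · exact absurd ⟨hc, hd⟩ not_both
  all_goals simp [hc, hd]

theorem CommEquiv.filter_eq {B : Type*} [DecidableEq B] {M : CoxeterMatrix B} {a b : B}
    (hab : M a b ≠ 2) {l l' : List B} (h : CommEquiv M l l') :
    l.filter (fun x ↦ x = a ∨ x = b) = l'.filter (fun x ↦ x = a ∨ x = b) := by
  induction h with
  | refl => rfl
  | tail _ h ih => exact ih.trans (h.elim (·.filter_eq hab) fun h ↦ (h.filter_eq hab).symm)

section AlternatingWord

variable {B : Type*}

theorem reverse_alternatingWord (i j : B) (n : ℕ) :
    (alternatingWord i j n).reverse =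
      if Even n then alternatingWord j i n else alternatingWord i j n := by
  induction n generalizing i j with
  | zero => simp [alternatingWord]
  | succ n ih =>
    calc (alternatingWord i j (n + 1)).reverse
        = j :: if Even n then alternatingWord i j n else alternatingWord j i n := by
          rw [alternatingWord_succ, concat_eq_append, reverse_append, ih, reverse_singleton,
            singleton_append]
      _ = if Even (n + 1) then alternatingWord j i (n + 1) else alternatingWord i j (n + 1) := by
          by_cases h : Even n <;> simp [alternatingWord_succ', Nat.even_add_one, h]

theorem prod_map_alternatingWord_two_mul {G : Type*} [Monoid G] (f : B → G) (i j : B) (n : ℕ) :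
    ((alternatingWord i j (2 * n)).map f).prod = (f i * f j) ^ n := by
  induction n with
  | zero => simp [alternatingWord]
  | succ n ih =>
    rw [Nat.mul_succ, alternatingWord_succ', alternatingWord_succ', pow_succ', ← ih]
    simp [mul_assoc]

end AlternatingWord

variable {B W : Type*} [Group W] {M : CoxeterMatrix B} (cs : CoxeterSystem M W)

theorem rightInvSeq_alternatingWord (i j : B) (n : ℕ) :
    cs.rightInvSeq (alternatingWord i j n) =
      ((range n).map fun k ↦ cs.simple j * (cs.simple i * cs.simple j) ^ k).reverse := by
  induction n generalizing i j with
  | zero => simp [alternatingWord]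
  | succ n ih =>
    have conj_simple (k : ℕ) : MulAut.conj (cs.simple j)
        (cs.simple i * (cs.simple j * cs.simple i) ^ k) =
          cs.simple j * (cs.simple i * cs.simple j) ^ (k + 1) := by
      rw [MulAut.conj_apply, cs.inv_simple, ← mul_pow_mul, pow_succ]
      simp only [mul_assoc]
    rw [alternatingWord_succ, cs.rightInvSeq_concat, ih, range_succ_eq_map]
    simp [← conj_simple, Function.comp_def]

section SignedConj

variable [DecidableEq W]

/-- The action of the simple reflection `i` on group elements carrying a sign: conjugation on `W`,
changing the sign of `cs.simple i`. Restricted to reflections, it is the permutation representation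
on roots, a reflection with a sign standing for a root; it is defined on all of `W` to avoid a
subtype of reflections. It is used to see that inversion parities depend only on the element. -/
def signedConj (i : B) : Function.End (W × ZMod 2) := fun p ↦
  (cs.simple i * p.1 * cs.simple i, p.2 + if p.1 = cs.simple i then 1 else 0)

theorem prod_map_signedConj_apply (ω : List B) (p : W × ZMod 2) :
    (ω.map (signedConj cs)).prod p =
      (cs.wordProd ω * p.1 * (cs.wordProd ω)⁻¹, p.2 + (cs.rightInvSeq ω).count p.1) := by
  induction ω with
  | nil => simp [Function.End.one_def]
  | cons i ω ih =>
    have conj_eq_simple_iff : cs.wordProd ω * p.1 * (cs.wordProd ω)⁻¹ = cs.simple i ↔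
        (cs.wordProd ω)⁻¹ * cs.simple i * cs.wordProd ω = p.1 := by
      rw [mul_inv_eq_iff_eq_mul, mul_assoc, inv_mul_eq_iff_eq_mul, eq_comm]
    rw [map_cons, prod_cons]
    change signedConj cs i ((ω.map (signedConj cs)).prod p) = _
    rw [ih]
    simp only [signedConj, CoxeterSystem.rightInvSeq, cs.wordProd_cons, mul_inv_rev, cs.inv_simple,
      conj_eq_simple_iff, count_cons, beq_iff_eq, Nat.cast_add, Nat.cast_ite, Nat.cast_one,
      Nat.cast_zero]
    simp only [mul_assoc, add_assoc]

theorem even_count_rightInvSeq_alternatingWord_two_mul (i j : B) (t : W) :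
    Even ((cs.rightInvSeq (alternatingWord i j (2 * M i j))).count t) := by
  have periodic (k : ℕ) : cs.simple j * (cs.simple i * cs.simple j) ^ (M i j + k) =
      cs.simple j * (cs.simple i * cs.simple j) ^ k := by
    rw [pow_add, cs.simple_mul_simple_pow, one_mul]
  rw [rightInvSeq_alternatingWord, count_reverse, two_mul, range_add, map_append, map_map,
    count_append]
  simp only [Function.comp_def, periodic]
  exact Even.add_self _

theorem isLiftable_signedConj : M.IsLiftable (signedConj cs) := by
  intro i j
  have wordProd_eq_one : cs.wordProd (alternatingWord i j (2 * M i j)) = 1 := by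
    rw [CoxeterSystem.wordProd, prod_map_alternatingWord_two_mul, cs.simple_mul_simple_pow]
  have count_eq_zero (t : W) :
      ((cs.rightInvSeq (alternatingWord i j (2 * M i j))).count t : ZMod 2) = 0 :=
    ZMod.natCast_eq_zero_iff_even.2 (even_count_rightInvSeq_alternatingWord_two_mul cs i j t)
  rw [← prod_map_alternatingWord_two_mul]
  funext p
  rw [prod_map_signedConj_apply, wordProd_eq_one, count_eq_zero]
  simp [Function.End.one_def]

theorem count_rightInvSeq_modEq_two {ω ω' : List B} (h : cs.wordProd ω = cs.wordProd ω') (t : W) :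
    (cs.rightInvSeq ω).count t ≡ (cs.rightInvSeq ω').count t [MOD 2] := by
  let φ := cs.lift ⟨signedConj cs, isLiftable_signedConj cs⟩
  have φ_wordProd (ω : List B) : φ (cs.wordProd ω) = (ω.map (signedConj cs)).prod := by
    rw [CoxeterSystem.wordProd, map_list_prod, map_map]
    congr 2
    exact funext (cs.lift_apply_simple _)
  have h_apply := congrFun (φ_wordProd ω ▸ φ_wordProd ω' ▸ congrArg φ h) (t, 0)
  rw [prod_map_signedConj_apply, prod_map_signedConj_apply] at h_apply
  simpa [← ZMod.natCast_eq_natCast_iff] using congrArg Prod.snd h_apply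

theorem isRightDescent_of_odd_count_rightInvSeq {ω : List B} {j : B}
    (h : Odd ((cs.rightInvSeq ω).count (cs.simple j))) : cs.IsRightDescent (cs.wordProd ω) j := by
  obtain ⟨r, hr, hωr⟩ := cs.exists_isReduced (cs.wordProd ω)
  have odd_count : Odd ((cs.rightInvSeq r).count (cs.simple j)) := by
    rw [Nat.odd_iff] at h ⊢
    rw [← h]
    exact count_rightInvSeq_modEq_two cs hωr.symm _
  rw [← cs.isRightInversion_simple_iff_isRightDescent, hωr]
  exact cs.isRightInversion_of_mem_rightInvSeq hr (count_pos_iff.1 odd_count.pos)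

theorem isRightDescent_wordProd_iff_odd_count {ω : List B} {j : B} :
    cs.IsRightDescent (cs.wordProd ω) j ↔ Odd ((cs.rightInvSeq ω).count (cs.simple j)) := by
  refine ⟨fun h ↦ ?_, isRightDescent_of_odd_count_rightInvSeq cs⟩
  by_contra not_odd
  have count_concat : (cs.rightInvSeq (ω.concat j)).count (cs.simple j) =
      (cs.rightInvSeq ω).count (cs.simple j) + 1 := by
    have conj_self : MulAut.conj (cs.simple j) (cs.simple j) = cs.simple j := by simp
    rw [cs.rightInvSeq_concat, concat_eq_append, count_append, count_singleton_self]
    nth_rw 1 [← conj_self]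
    rw [count_map_of_injective _ _ (MulAut.conj (cs.simple j)).injective]
  have descent_mul := isRightDescent_of_odd_count_rightInvSeq cs (ω := ω.concat j) (j := j)
    (count_concat ▸ (Nat.not_odd_iff_even.1 not_odd).add_one)
  rw [cs.wordProd_concat] at descent_mul
  exact cs.isRightDescent_iff_not_isRightDescent_mul.1 h descent_mul

end SignedConj

theorem exists_wordProd_mul_simple_eq_wordProd_eraseIdx {ω : List B} {j : B}
    (h : cs.IsRightDescent (cs.wordProd ω) j) :
    ∃ k < ω.length, cs.wordProd ω * cs.simple j = cs.wordProd (ω.eraseIdx k) := by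
  classical
  have mem : cs.simple j ∈ cs.rightInvSeq ω :=
    count_pos_iff.1 ((isRightDescent_wordProd_iff_odd_count cs).1 h).pos
  obtain ⟨k, hk, hkj⟩ := getElem_of_mem mem
  refine ⟨k, by simpa using hk, ?_⟩
  rw [← cs.wordProd_mul_getD_rightInvSeq, getD_eq_getElem _ _ hk, hkj]

theorem exists_isReduced_wordProd_eq_mul_simple {ω : List B} (hω : cs.IsReduced ω) (i : B) :
    ∃ ω', cs.IsReduced ω' ∧ ω' ⊆ i :: ω ∧ cs.wordProd ω' = cs.wordProd ω * cs.simple i := by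
  by_cases hi : cs.IsRightDescent (cs.wordProd ω) i
  · obtain ⟨k, hk, hωk⟩ := exists_wordProd_mul_simple_eq_wordProd_eraseIdx cs hi
    refine ⟨ω.eraseIdx k, ?_, subset_cons_of_subset i fun _ ↦ mem_of_mem_eraseIdx, hωk.symm⟩
    have := cs.isRightDescent_iff.1 hi
    rw [hω.eq, ← length_eraseIdx_add_one hk, hωk] at this
    exact Nat.succ_injective this
  · refine ⟨ω.concat i, ?_, by simp, cs.wordProd_concat i ω⟩
    rw [CoxeterSystem.IsReduced, cs.wordProd_concat, cs.not_isRightDescent_iff.1 hi, hω.eq,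
      length_concat]

theorem exists_isReduced_of_mem_closure {I : Set B} {w : W}
    (hw : w ∈ Subgroup.closure (cs.simple '' I)) :
    ∃ ω, cs.IsReduced ω ∧ (∀ i ∈ ω, i ∈ I) ∧ w = cs.wordProd ω := by
  have hinv : (cs.simple '' I)⁻¹ = cs.simple '' I := by
    rw [← Set.image_inv_eq_inv, Set.image_image]
    simp only [cs.inv_simple]
  rw [← Subgroup.mem_toSubmonoid, Subgroup.closure_toSubmonoid, hinv, Set.union_self] at hw
  induction hw using Submonoid.closure_induction_right with
  | one => exact ⟨[], by simp [CoxeterSystem.IsReduced], by simp, cs.wordProd_nil.symm⟩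
  | mul_right w _ _ hy ih =>
    obtain ⟨ω, hω, hωI, rfl⟩ := ih
    obtain ⟨i, hi, rfl⟩ := hy
    obtain ⟨ω', hω', hsub, hprod⟩ := exists_isReduced_wordProd_eq_mul_simple cs hω i
    exact ⟨ω', hω', fun k hk ↦ forall_mem_cons.2 ⟨hi, hωI⟩ k (hsub hk), hprod.symm⟩

theorem count_rightInvSeq_braidWord [DecidableEq W] (i j : B) :
    (cs.rightInvSeq (braidWord M i j)).count (cs.simple j) =
      M i j / orderOf (cs.simple i * cs.simple j) := by
  have dvd : orderOf (cs.simple i * cs.simple j) ∣ M i j :=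
    orderOf_dvd_of_pow_eq_one (cs.simple_mul_simple_pow i j)
  rcases (M i j).eq_zero_or_pos with hM | hM
  · simp [braidWord, hM, alternatingWord]
  calc (cs.rightInvSeq (braidWord M i j)).count (cs.simple j)
      = (M i j).count (fun k ↦ k ≡ 0 [MOD orderOf (cs.simple i * cs.simple j)]) := by
        rw [braidWord, rightInvSeq_alternatingWord, count_reverse, count_eq_countP, countP_map,
          Nat.count]
        refine countP_congr fun k _ ↦ ?_
        simp [Nat.modEq_zero_iff_dvd, orderOf_dvd_iff_pow_eq_one]
    _ = M i j / orderOf (cs.simple i * cs.simple j) := by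
        rw [Nat.count_modEq_card _ (Nat.pos_of_dvd_of_pos dvd hM), Nat.mod_eq_zero_of_dvd dvd]
        simp

theorem isRightDescent_wordProd_braidWord {i j : B} (h : cs.wordProd (braidWord M i j) ≠ 1) :
    cs.IsRightDescent (cs.wordProd (braidWord M i j)) j := by
  classical
  rw [isRightDescent_wordProd_iff_odd_count, count_rightInvSeq_braidWord]
  contrapose! h
  obtain ⟨q, hq⟩ := even_iff_exists_two_mul.1 (Nat.not_odd_iff_even.1 h)
  have hM : M i j = 2 * (orderOf (cs.simple i * cs.simple j) * q) := by
    rw [← Nat.mul_div_cancel' (orderOf_dvd_of_pow_eq_one (cs.simple_mul_simple_pow i j)), hq]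
    ring
  rw [braidWord, hM, CoxeterSystem.wordProd, prod_map_alternatingWord_two_mul, pow_mul,
    pow_orderOf_eq_one, one_pow]

theorem inv_wordProd_braidWord (i j : B) :
    (cs.wordProd (braidWord M i j))⁻¹ = cs.wordProd (braidWord M i j) := by
  rw [← cs.wordProd_reverse, braidWord, reverse_alternatingWord]
  split_ifs
  · rw [← braidWord, cs.wordProd_braidWord_eq i j, braidWord, M.symmetric]
  · rfl

theorem isLeftDescent_wordProd_braidWord {i j : B} (h : cs.wordProd (braidWord M i j) ≠ 1) :
    cs.IsLeftDescent (cs.wordProd (braidWord M i j)) j := by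
  rw [← inv_wordProd_braidWord, cs.isLeftDescent_inv_iff]
  exact isRightDescent_wordProd_braidWord cs h

variable {cs}

theorem isLeftDescent_wordProd_cons {i : B} {l : List B} (h : cs.IsReduced (i :: l)) :
    cs.IsLeftDescent (cs.wordProd (i :: l)) i := by
  have hl : cs.IsReduced l := h.drop 1
  rw [CoxeterSystem.IsLeftDescent, h.eq, cs.wordProd_cons, cs.simple_mul_simple_cancel_left, hl.eq,
    length_cons]
  exact Nat.lt_succ_self _

theorem exists_isReduced_cons_of_isLeftDescent {w : W} {i : B} (h : cs.IsLeftDescent w i) :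
    ∃ l, cs.IsReduced (i :: l) ∧ cs.wordProd (i :: l) = w := by
  obtain ⟨l, hl, hwl⟩ := cs.exists_isReduced (cs.simple i * w)
  have hprod : cs.wordProd (i :: l) = w := by
    rw [cs.wordProd_cons, ← hwl, cs.simple_mul_simple_cancel_left]
  refine ⟨l, ?_, hprod⟩
  rw [CoxeterSystem.IsReduced, hprod, length_cons, ← hl.eq, ← hwl, cs.isLeftDescent_iff.1 h]

theorem FullyCommutative.eq_two_of_isLeftDescent {w : W} (hw : FullyCommutative cs w) {i j : B}
    (hij : i ≠ j) (hi : cs.IsLeftDescent w i) (hj : cs.IsLeftDescent w j) : M i j = 2 := by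
  classical
  obtain ⟨l, hl, hlw⟩ := exists_isReduced_cons_of_isLeftDescent hi
  obtain ⟨r, hr, hrw⟩ := exists_isReduced_cons_of_isLeftDescent hj
  by_contra hM
  have filter_eq := (hw _ _ hl hlw hr hrw).filter_eq hM
  exact hij (by simpa using congrArg head? filter_eq)

namespace CosetFactor

variable {I : Set B} {u x : W}

theorem isLeftDescent (hu : CosetFactor cs I u x) {i : B} (hi : cs.IsLeftDescent u i) :
    cs.IsLeftDescent x i := by
  obtain ⟨-, -, hlen⟩ := hu
  calc cs.length (cs.simple i * x)
      = cs.length (cs.simple i * u * (u⁻¹ * x)) := by rw [mul_assoc, mul_inv_cancel_left]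
    _ ≤ cs.length (cs.simple i * u) + cs.length (u⁻¹ * x) := cs.length_mul_le _ _
    _ < cs.length u + cs.length (u⁻¹ * x) := Nat.add_lt_add_right hi _
    _ = cs.length x := hlen.symm

theorem ne_one (hu : CosetFactor cs I u x) {i : B} (hiI : i ∈ I) (hi : cs.IsLeftDescent x i) :
    u ≠ 1 := by
  rintro rfl
  exact hu.2.1 i hiI (by simpa using hi)

theorem ne_wordProd_braidWord (hu : CosetFactor cs I u x) {i : B} (hiI : i ∈ I)
    (hi : cs.IsLeftDescent x i) {j k : B} (hk : ¬ cs.IsLeftDescent x k) :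
    u ≠ cs.wordProd (braidWord M j k) := by
  rintro rfl
  exact hk (hu.isLeftDescent (isLeftDescent_wordProd_braidWord cs (hu.ne_one hiI hi)))

theorem two_le_length (hu : CosetFactor cs I u x) {i j : B} (hiI : i ∈ I) (hjI : j ∈ I)
    (hi : cs.IsLeftDescent x i) (hij : cs.IsLeftDescent (cs.simple i * x) j)
    (unique : ∀ k ∈ I, cs.IsLeftDescent x k → k = i) : 2 ≤ cs.length u := by
  obtain ⟨ω, hω, hωI, rfl⟩ := exists_isReduced_of_mem_closure cs hu.1
  rw [hω.eq]
  match ω with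
  | [] => exact absurd cs.wordProd_nil (hu.ne_one hiI hi)
  | [k] =>
    obtain rfl : k = i :=
      unique k (hωI k mem_cons_self) (hu.isLeftDescent (isLeftDescent_wordProd_cons hω))
    exact absurd hij (by simpa using hu.2.1 j hjI)
  | _ :: _ :: _ => simp

end CosetFactor

end

/-- if a fully commutative `w` has a reduced word `a :: b :: l'` with
`m(a,b) ≥ 3`, then in the coset decomposition with respect to `I = {a, b}` the factor
`w_I` is not the longest element of `W_I` (so `w` lies in a left `{a,b}`-string, its
`w_I`-factor having length at least 2), and the lower left star operation removes the
leftmost letter, yielding `b :: l'`. -/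
theorem stmt4 {B W : Type*} [Group W] {M : CoxeterMatrix B} (cs : CoxeterSystem M W)
    (a b : B) (l' : List B) (hm : 3 ≤ M a b)
    (hred : cs.IsReduced (a :: b :: l'))
    (hfc : FullyCommutative cs (cs.wordProd (a :: b :: l'))) :
    ∀ u : W, CosetFactor cs ({a, b} : Set B) u (cs.wordProd (a :: b :: l')) →
      u ≠ cs.wordProd (alternatingWord a b (M a b)) ∧
      2 ≤ cs.length u ∧
      cs.simple a * cs.wordProd (a :: b :: l') = cs.wordProd (b :: l') := by
  intro u hu
  have hw : cs.simple a * cs.wordProd (a :: b :: l') = cs.wordProd (b :: l') := by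
    rw [cs.wordProd_cons, cs.simple_mul_simple_cancel_left]
  have hab : a ≠ b := by
    rintro rfl
    simp at hm
  have ha : cs.IsLeftDescent (cs.wordProd (a :: b :: l')) a := isLeftDescent_wordProd_cons hred
  have hb : ¬ cs.IsLeftDescent (cs.wordProd (a :: b :: l')) b := fun hb ↦ by
    have := hfc.eq_two_of_isLeftDescent hab ha hb
    omega
  have hb' : cs.IsLeftDescent (cs.simple a * cs.wordProd (a :: b :: l')) b :=
    hw ▸ isLeftDescent_wordProd_cons (hred.drop 1)
  refine ⟨hu.ne_wordProd_braidWord (by simp) ha hb,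
    hu.two_le_length (by simp) (by simp) ha hb' ?_, hw⟩
  rintro k (rfl | rfl) hk
  exacts [rfl, absurd hk hb]
end

section
/- Let W be a Coxeter group, I = {s,t} ⊆ S with 3 ≤ m(s,t) < ∞, and let y be an element of a left {s,t}-string for which the lower left star ₍*₎y is defined. Then y and ₍*₎y lie in the same left Kazhdan–Lusztig cell, i.e., y ∼_L ₍*₎y. -/
open CoxeterSystem

/-!
Let `u n` be the product of `alternatingWord a b n` with an element `w'` without left descents in
`{a, b}`. Suppose that the letter extending `alternatingWord a b n` is not a left descent of `u n`
for `n < m(a, b)`. Then `u r` covers `u (r - 1)`, and the first letter of `u (r - 1)`, being also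
the letter that would extend `u r`, is a left descent of `u (r - 1)` but not of `u r`, so the two
standard facts on `≤_L` give both inequalities.

Left descents are read off from the action of `W` on the dual of its geometric representation: if
`g` is positive on all simple roots, then `i` is a left descent of `w` exactly when `w • g` is
negative on the simple root `i`. This is proved by induction on the length, stripping a maximal
alternating word off `w`. The values of `u n • g` on the extending letters satisfy the recurrence of
the Chebyshev polynomials `S n` evaluated at `2 * cos (π / m(a, b))`, which are positive for
`n < m(a, b) - 1` and vanish for `n = m(a, b) - 1`.
-/

section Chebyshev

open Polynomial.Chebyshev
open scoped Real

theorem sin_pi_div_natCast_pos {m : ℕ} (hm : 2 ≤ m) : 0 < Real.sin (π / m) := by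
  have hm' : (1 : ℝ) < m := by exact_mod_cast hm
  exact Real.sin_pos_of_pos_of_lt_pi (by positivity) (div_lt_self Real.pi_pos hm')

theorem chebyshevS_eval_two_mul_cos_pi_div_pos {m n : ℕ} (hn : n + 1 < m ∨ m = 0) :
    0 < (S ℝ n).eval (2 * Real.cos (π / m)) := by
  obtain hn | rfl := hn
  · have hm : (0 : ℝ) < m := by exact_mod_cast (by omega : 0 < m)
    have hn' : (n + 1 : ℝ) < m := by exact_mod_cast hn
    have hlt : ((n : ℤ) + 1 : ℝ) * (π / m) < π := by
      rw [mul_div_left_comm]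
      exact mul_lt_of_lt_one_right Real.pi_pos ((div_lt_one hm).mpr (by exact_mod_cast hn'))
    refine pos_of_mul_pos_left ?_ (sin_pi_div_natCast_pos (m := m) (by omega)).le
    rw [S_two_mul_real_cos]
    exact Real.sin_pos_of_pos_of_lt_pi (by positivity) hlt
  · simp only [Nat.cast_zero, div_zero, Real.cos_zero, mul_one, S_eval_two]
    positivity

theorem chebyshevS_sub_one_eval_two_mul_cos_pi_div_eq_zero {m : ℕ} (hm : 2 ≤ m) :
    (S ℝ (m - 1)).eval (2 * Real.cos (π / m)) = 0 := by
  refine (mul_eq_zero.mp ?_).resolve_right (sin_pi_div_natCast_pos hm).ne'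
  have hm' : (m : ℝ) ≠ 0 := by positivity
  rw [S_two_mul_real_cos]
  push_cast
  rw [sub_add_cancel, mul_div_cancel₀ _ hm', Real.sin_pi]

theorem chebyshevS_eval_two_mul_cos_pi_div_nonneg {m n : ℕ} (hm : m ≠ 1) (hn : n < m ∨ m = 0) :
    0 ≤ (S ℝ n).eval (2 * Real.cos (π / m)) := by
  obtain rfl | hn' := eq_or_ne m (n + 1)
  · simpa using (chebyshevS_sub_one_eval_two_mul_cos_pi_div_eq_zero (m := n + 1) (by omega)).ge
  · exact (chebyshevS_eval_two_mul_cos_pi_div_pos (by omega)).le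

theorem chebyshevS_add_chebyshevS_sub_one_eval_two_mul_cos_eq_zero {q : ℕ} (hq : q ≠ 0) :
    (S ℝ q).eval (2 * Real.cos (2 * π / (2 * q + 1))) +
      (S ℝ (q - 1)).eval (2 * Real.cos (2 * π / (2 * q + 1))) = 0 := by
  set θ : ℝ := 2 * π / (2 * q + 1) with hθ
  have hq' : (1 : ℝ) ≤ q := by exact_mod_cast Nat.one_le_iff_ne_zero.mpr hq
  have hsin : Real.sin θ ≠ 0 := by
    refine (Real.sin_pos_of_pos_of_lt_pi (by positivity) ?_).ne'
    rw [hθ, div_lt_iff₀ (by positivity)]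
    nlinarith [Real.pi_pos]
  have hreflect : (q + 1 : ℝ) * θ = 2 * π - q * θ := by
    rw [hθ]
    field_simp
    ring
  refine (mul_eq_zero.mp ?_).resolve_right hsin
  rw [add_mul, S_two_mul_real_cos, S_two_mul_real_cos]
  push_cast
  rw [sub_add_cancel, hreflect, Real.sin_two_pi_sub, neg_add_cancel]

end Chebyshev

section Reflection

open Module
open scoped Real

variable {E : Type*} [AddCommGroup E]

theorem reflection_mul_reflection_sq_eq_one {R : Type*} [CommRing R] [Module R E] {x y : E}
    {f g : Dual R E} (hf : f x = 2) (hg : g y = 2) (hfy : f y = 0) (hgx : g x = 0) :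
    (reflection hf * reflection hg) ^ 2 = 1 := by
  ext z
  simp only [pow_two, LinearEquiv.mul_apply, reflection_apply, map_sub, map_smul, hf, hg, hfy, hgx,
    LinearEquiv.coe_one, id_eq]
  module

theorem reflection_mul_reflection_pow_eq_one [Module ℝ E] {x y : E} {f g : Dual ℝ E}
    (hf : f x = 2) (hg : g y = 2) {m : ℕ} (hm : 3 ≤ m)
    (hfg : f y * g x = (2 * Real.cos (π / m)) ^ 2) :
    (reflection hf * reflection hg) ^ m = 1 := by
  have ht : 2 * Real.cos (2 * π / m) = f y * g x - 2 := by
    rw [hfg, mul_div_assoc, Real.cos_two_mul]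
    ring
  ext z
  rw [reflection_mul_reflection_pow_apply hf hg m z _ ht]
  obtain ⟨q, rfl | rfl⟩ := Nat.even_or_odd' m
  · have hS := chebyshevS_sub_one_eval_two_mul_cos_pi_div_eq_zero (m := q) (by omega)
    rw [← mul_div_mul_left π (q : ℝ) two_ne_zero] at hS
    rw [show (((2 * q : ℕ) : ℤ) - 2) / 2 = q - 1 by omega,
      show (((2 * q : ℕ) : ℤ) - 1) / 2 = q - 1 by omega]
    simp [hS]
  · have hS := chebyshevS_add_chebyshevS_sub_one_eval_two_mul_cos_eq_zero (q := q) (by omega)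
    rw [show (((2 * q + 1 : ℕ) : ℤ) - 2) / 2 = q - 1 by omega,
      show (((2 * q + 1 : ℕ) : ℤ) - 1) / 2 = q by omega,
      show (((2 * q + 1 : ℕ) : ℤ) - 3) / 2 = q - 1 by omega,
      show ((2 * q + 1 : ℕ) : ℤ) / 2 = q by omega]
    simp [hS]

end Reflection

section DualRepresentation

open scoped Real

variable {B : Type*} (M : CoxeterMatrix B)

/-- The simple root `i` of the geometric representation, as the function `j ↦ 2 * ⟨αᵢ, αⱼ⟩` on the
simple roots. For `m(i, j) = ∞`, encoded as `M i j = 0`, the convention `π / 0 = 0` yields the usual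
value `-2`. -/
noncomputable def dualRoot (i : B) : B → ℝ := fun j => -(2 * Real.cos (π / M i j))

theorem proj_dualRoot_self (i : B) :
    (LinearMap.proj i : Module.Dual ℝ (B → ℝ)) (dualRoot M i) = 2 := by
  simp [dualRoot]

/-- The action of the simple reflection `i` on the dual of the geometric representation, whose
elements are encoded by their values on the simple roots. -/
noncomputable def dualReflection (i : B) : (B → ℝ) ≃ₗ[ℝ] (B → ℝ) :=
  Module.reflection (proj_dualRoot_self M i)

theorem dualReflection_apply (i j : B) (g : B → ℝ) :
    dualReflection M i g j = g j + 2 * Real.cos (π / M i j) * g i := by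
  simp only [dualReflection, Module.reflection_apply, LinearMap.proj_apply, dualRoot, Pi.sub_apply,
    Pi.smul_apply, smul_eq_mul]
  ring

theorem isLiftable_dualReflection : M.IsLiftable (dualReflection M) := by
  intro i j
  obtain h0 | h1 | h2 | h3 : M i j = 0 ∨ M i j = 1 ∨ M i j = 2 ∨ 3 ≤ M i j := by omega
  · rw [h0, pow_zero]
  · obtain rfl : i = j := by
      by_contra hij
      exact M.off_diagonal i j hij h1
    rw [h1, pow_one]
    ext1 g
    exact Module.involutive_reflection (proj_dualRoot_self M i) g
  · rw [h2]
    apply reflection_mul_reflection_sq_eq_one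
    · simp [dualRoot, M.symmetric j i, h2]
    · simp [dualRoot, h2]
  · apply reflection_mul_reflection_pow_eq_one _ _ h3
    simp only [LinearMap.proj_apply, dualRoot, M.symmetric j i]
    ring

variable {W : Type*} [Group W] {M} (cs : CoxeterSystem M W)

/-- The dual of the geometric representation of a Coxeter group. -/
noncomputable def dualRep : W →* ((B → ℝ) ≃ₗ[ℝ] (B → ℝ)) :=
  cs.lift ⟨dualReflection M, isLiftable_dualReflection M⟩

theorem dualRep_simple_mul_apply (i j : B) (w : W) (g : B → ℝ) :
    dualRep cs (cs.simple i * w) g j =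
      dualRep cs w g j + 2 * Real.cos (π / M i j) * dualRep cs w g i := by
  simp [dualRep, dualReflection_apply]

theorem dualRep_simple_mul_apply_self (i : B) (w : W) (g : B → ℝ) :
    dualRep cs (cs.simple i * w) g i = -dualRep cs w g i := by
  rw [dualRep_simple_mul_apply, M.diagonal, Nat.cast_one, div_one, Real.cos_pi]
  ring

end DualRepresentation

section NextLetter

variable {B : Type*}

/-- The letter that extends `alternatingWord a b n` to the left to the alternating word of length
`n + 1`. -/
def nextLetter (a b : B) (n : ℕ) : B := if Even n then b else a

theorem nextLetter_add_two (a b : B) (n : ℕ) : nextLetter a b (n + 2) = nextLetter a b n := by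
  simp [nextLetter, Nat.even_add]

theorem alternatingWord_succ_eq_nextLetter_cons (a b : B) (n : ℕ) :
    alternatingWord a b (n + 1) = nextLetter a b n :: alternatingWord a b n :=
  alternatingWord_succ' a b n

theorem nextLetter_eq_and_succ_eq (a b : B) (n : ℕ) :
    nextLetter a b n = a ∧ nextLetter a b (n + 1) = b ∨
      nextLetter a b n = b ∧ nextLetter a b (n + 1) = a := by
  by_cases hn : Even n <;> simp [nextLetter, Nat.even_add_one, hn]

theorem coxeterMatrix_nextLetter_succ (M : CoxeterMatrix B) (a b : B) (n : ℕ) :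
    M (nextLetter a b n) (nextLetter a b (n + 1)) = M a b := by
  obtain ⟨h, h'⟩ | ⟨h, h'⟩ := nextLetter_eq_and_succ_eq a b n
  · rw [h, h']
  · rw [h, h', M.symmetric]

end NextLetter

section Descent

open Polynomial.Chebyshev
open scoped Real

variable {B W : Type*} [Group W] {M : CoxeterMatrix B} (cs : CoxeterSystem M W)

theorem wordProd_alternatingWord_succ_mul (a b : B) (n : ℕ) (w : W) :
    cs.wordProd (alternatingWord a b (n + 1)) * w =
      cs.simple (nextLetter a b n) * (cs.wordProd (alternatingWord a b n) * w) := by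
  rw [alternatingWord_succ_eq_nextLetter_cons, wordProd_cons, mul_assoc]

theorem length_alternatingWord_mul_le (a b : B) (n : ℕ) (w : W) :
    cs.length (cs.wordProd (alternatingWord a b n) * w) ≤ n + cs.length w := by
  refine (cs.length_mul_le _ _).trans (Nat.add_le_add_right ?_ _)
  simpa using cs.length_wordProd_le (alternatingWord a b n)

theorem isLeftDescent_alternatingWord_succ_mul_of_length_eq {a b : B} {n : ℕ} {w : W}
    (h : cs.length (cs.wordProd (alternatingWord a b (n + 1)) * w) = n + 1 + cs.length w) :
    cs.IsLeftDescent (cs.wordProd (alternatingWord a b (n + 1)) * w) (nextLetter a b n) := by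
  have hle := length_alternatingWord_mul_le cs a b n w
  rw [IsLeftDescent, h, wordProd_alternatingWord_succ_mul, simple_mul_simple_cancel_left]
  omega

theorem lt_or_eq_zero_of_not_isLeftDescent_alternatingWord_mul {a b : B} {n : ℕ} {w : W}
    (h : cs.length (cs.wordProd (alternatingWord a b n) * w) = n + cs.length w)
    (hnext : ¬ cs.IsLeftDescent (cs.wordProd (alternatingWord a b n) * w) (nextLetter a b n)) :
    n < M a b ∨ M a b = 0 := by
  by_contra! hM
  have hlt : cs.length (cs.wordProd (alternatingWord a b (n + 1))) < n + 1 := by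
    have hred := cs.not_isReduced_alternatingWord a b hM.2 (m := n + 1) (by omega)
    have hle := cs.length_wordProd_le (alternatingWord a b (n + 1))
    rw [CoxeterSystem.IsReduced] at hred
    rw [length_alternatingWord] at hred hle
    omega
  have hmul := cs.length_mul_le (cs.wordProd (alternatingWord a b (n + 1))) w
  rw [wordProd_alternatingWord_succ_mul, cs.not_isLeftDescent_iff.mp hnext] at hmul
  omega

theorem exists_eq_alternatingWord_mul (i j : B) (w : W) :
    ∃ (a b : B) (n : ℕ) (x : W), (a = i ∧ b = j ∨ a = j ∧ b = i) ∧
      w = cs.wordProd (alternatingWord a b n) * x ∧ cs.length w = n + cs.length x ∧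
      ¬ cs.IsLeftDescent x i ∧ ¬ cs.IsLeftDescent x j := by
  induction hN : cs.length w using Nat.strong_induction_on generalizing w with
  | _ N ih =>
  subst hN
  by_cases hdesc : ∃ k, (k = i ∨ k = j) ∧ cs.IsLeftDescent w k
  · obtain ⟨k, hk, hkw⟩ := hdesc
    obtain ⟨a, b, n, x, hab, hx, hlen, hxi, hxj⟩ := ih _ hkw _ rfl
    have hw : w = cs.simple k * (cs.wordProd (alternatingWord a b n) * x) := by
      rw [← hx, simple_mul_simple_cancel_left]
    have hlw := cs.isLeftDescent_iff.mp hkw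
    obtain rfl | hkn : k = nextLetter a b n ∨ k = nextLetter a b (n + 1) := by
      grind [nextLetter_eq_and_succ_eq a b n]
    · exact ⟨a, b, n + 1, x, hab, by rwa [wordProd_alternatingWord_succ_mul], by omega, hxi, hxj⟩
    · rcases n with _ | n
      · refine ⟨b, a, 1, x, hab.symm.imp And.symm And.symm, ?_, by omega, hxi, hxj⟩
        simpa [hkn, nextLetter, alternatingWord] using hw
      · rw [nextLetter_add_two] at hkn
        rw [hx] at hlen
        have hkx := isLeftDescent_alternatingWord_succ_mul_of_length_eq cs hlen
        rw [← hx, ← hkn] at hkx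
        exact absurd hkx (cs.isLeftDescent_iff_not_isLeftDescent_mul.mp hkw)
  · push Not at hdesc
    exact ⟨i, j, 0, w, .inl ⟨rfl, rfl⟩, by simp [alternatingWord], by simp,
      hdesc i (.inl rfl), hdesc j (.inr rfl)⟩

theorem exists_eq_alternatingWord_mul_of_not_isLeftDescent {w : W} {i : B} (hw : w ≠ 1)
    (hi : ¬ cs.IsLeftDescent w i) :
    ∃ (a b : B) (n : ℕ) (x : W), a ≠ b ∧ (n < M a b ∨ M a b = 0) ∧ nextLetter a b n = i ∧
      w = cs.wordProd (alternatingWord a b n) * x ∧ cs.length x < cs.length w ∧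
      ¬ cs.IsLeftDescent x a ∧ ¬ cs.IsLeftDescent x b := by
  obtain ⟨j, hj⟩ := cs.exists_leftDescent_of_ne_one hw
  have hij : i ≠ j := by
    rintro rfl
    exact hi hj
  obtain ⟨a, b, n, x, hab, rfl, hlen, hxi, hxj⟩ := exists_eq_alternatingWord_mul cs i j w
  obtain ⟨n, rfl⟩ : ∃ k, n = k + 1 := by
    refine Nat.exists_eq_succ_of_ne_zero ?_
    rintro rfl
    exact hxj (by simpa [alternatingWord] using hj)
  have hi_ne : nextLetter a b n ≠ i := by
    rintro rfl
    exact hi (isLeftDescent_alternatingWord_succ_mul_of_length_eq cs hlen)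
  have hnext : nextLetter a b (n + 1) = i := by
    grind [nextLetter_eq_and_succ_eq a b n]
  refine ⟨a, b, n + 1, x, by grind, ?_, hnext, rfl, by omega, by grind, by grind⟩
  exact lt_or_eq_zero_of_not_isLeftDescent_alternatingWord_mul cs hlen (hnext ▸ hi)

theorem dualRep_alternatingWord_mul_apply_nextLetter (a b : B) (w : W) (g : B → ℝ) (n : ℕ) :
    dualRep cs (cs.wordProd (alternatingWord a b n) * w) g (nextLetter a b n) =
      (S ℝ n).eval (2 * Real.cos (π / M a b)) * dualRep cs w g b +
        (S ℝ (n - 1)).eval (2 * Real.cos (π / M a b)) * dualRep cs w g a := by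
  induction n using Nat.twoStepInduction with
  | zero => simp [nextLetter, alternatingWord]
  | one =>
    rw [wordProd_alternatingWord_succ_mul, dualRep_simple_mul_apply, coxeterMatrix_nextLetter_succ]
    simp [nextLetter, alternatingWord, add_comm]
  | more n ih ih' =>
    rw [wordProd_alternatingWord_succ_mul, dualRep_simple_mul_apply, coxeterMatrix_nextLetter_succ,
      ih', nextLetter_add_two, wordProd_alternatingWord_succ_mul, dualRep_simple_mul_apply_self, ih]
    push_cast
    rw [add_sub_cancel_right, show (n + 2 - 1 : ℤ) = n + 1 by ring, S_add_two ℝ n,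
      S_add_one ℝ n]
    simp only [Polynomial.eval_sub, Polynomial.eval_mul, Polynomial.eval_X]
    ring

theorem dualRep_alternatingWord_mul_apply_nextLetter_pos {a b : B} (hab : a ≠ b) {w : W}
    {g : B → ℝ} (ha : 0 < dualRep cs w g a) (hb : 0 < dualRep cs w g b) {n : ℕ}
    (hn : n < M a b ∨ M a b = 0) :
    0 < dualRep cs (cs.wordProd (alternatingWord a b n) * w) g (nextLetter a b n) := by
  rw [dualRep_alternatingWord_mul_apply_nextLetter]
  cases n with
  | zero => simpa using hb
  | succ n =>
    have hS := chebyshevS_eval_two_mul_cos_pi_div_nonneg (M.off_diagonal a b hab) hn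
    have hS' := chebyshevS_eval_two_mul_cos_pi_div_pos hn
    rw [Nat.cast_succ, add_sub_cancel_right]
    exact add_pos_of_nonneg_of_pos (mul_nonneg (by exact_mod_cast hS) hb.le) (mul_pos hS' ha)

theorem dualRep_apply_pos_of_not_isLeftDescent {g : B → ℝ} (hg : ∀ i, 0 < g i) {w : W} {i : B}
    (hi : ¬ cs.IsLeftDescent w i) : 0 < dualRep cs w g i := by
  induction hN : cs.length w using Nat.strong_induction_on generalizing w i with
  | _ N ih =>
  subst hN
  obtain rfl | hw := eq_or_ne w 1
  · simpa using hg i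
  · obtain ⟨a, b, n, x, hab, hn, rfl, rfl, hlt, hxa, hxb⟩ :=
      exists_eq_alternatingWord_mul_of_not_isLeftDescent cs hw hi
    exact dualRep_alternatingWord_mul_apply_nextLetter_pos cs hab (ih _ hlt hxa rfl)
      (ih _ hlt hxb rfl) hn

theorem isLeftDescent_iff_dualRep_apply_neg {g : B → ℝ} (hg : ∀ i, 0 < g i) {w : W} {i : B} :
    cs.IsLeftDescent w i ↔ dualRep cs w g i < 0 := by
  refine ⟨fun h => ?_, fun h => ?_⟩
  · rw [isLeftDescent_iff_not_isLeftDescent_mul] at h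
    have hpos := dualRep_apply_pos_of_not_isLeftDescent cs hg h
    rwa [dualRep_simple_mul_apply_self, neg_pos] at hpos
  · by_contra hi
    exact h.not_gt (dualRep_apply_pos_of_not_isLeftDescent cs hg hi)

theorem not_isLeftDescent_alternatingWord_mul {a b : B} (hab : a ≠ b) {w : W}
    (ha : ¬ cs.IsLeftDescent w a) (hb : ¬ cs.IsLeftDescent w b) {n : ℕ}
    (hn : n < M a b ∨ M a b = 0) :
    ¬ cs.IsLeftDescent (cs.wordProd (alternatingWord a b n) * w) (nextLetter a b n) := by
  have hone (i : B) : 0 < (1 : B → ℝ) i := one_pos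
  rw [isLeftDescent_iff_dualRep_apply_neg cs hone, not_lt]
  exact (dualRep_alternatingWord_mul_apply_nextLetter_pos cs hab
    (dualRep_apply_pos_of_not_isLeftDescent cs hone ha)
    (dualRep_apply_pos_of_not_isLeftDescent cs hone hb) hn).le

theorem isLeftDescent_alternatingWord_succ_mul {a b : B} (hab : a ≠ b) {w : W}
    (ha : ¬ cs.IsLeftDescent w a) (hb : ¬ cs.IsLeftDescent w b) {n : ℕ}
    (hn : n < M a b ∨ M a b = 0) :
    cs.IsLeftDescent (cs.wordProd (alternatingWord a b (n + 1)) * w) (nextLetter a b n) := by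
  rw [isLeftDescent_iff_not_isLeftDescent_mul, wordProd_alternatingWord_succ_mul,
    simple_mul_simple_cancel_left]
  exact not_isLeftDescent_alternatingWord_mul cs hab ha hb hn

end Descent

theorem stmt11_general {B W : Type*} [Group W] {M : CoxeterMatrix B} (cs : CoxeterSystem M W)
    (leL : W → W → Prop)
    (h_ascent : ∀ (x : W) (i : B), ¬ cs.IsLeftDescent x i → leL (cs.simple i * x) x)
    (h_cover : ∀ (x y : W) (i : B), y = cs.simple i * x → cs.length y = cs.length x + 1 →
      (∃ j : B, cs.IsLeftDescent x j ∧ ¬ cs.IsLeftDescent y j) → leL x y)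
    (a b : B) (hab : a ≠ b)
    (w' : W) (hw'a : ¬ cs.IsLeftDescent w' a) (hw'b : ¬ cs.IsLeftDescent w' b)
    (r : ℕ) (hr2 : 2 ≤ r) (hrm : r < M a b ∨ M a b = 0) :
    leL (cs.wordProd (alternatingWord a b r) * w')
        (cs.wordProd (alternatingWord a b (r - 1)) * w') ∧
    leL (cs.wordProd (alternatingWord a b (r - 1)) * w')
        (cs.wordProd (alternatingWord a b r) * w') := by
  obtain ⟨n, rfl⟩ := Nat.exists_eq_add_of_le' hr2
  rw [show n + 2 - 1 = n + 1 from rfl]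
  have hy := wordProd_alternatingWord_succ_mul cs a b (n + 1) w'
  have hx_ascent := not_isLeftDescent_alternatingWord_mul cs hab hw'a hw'b (n := n + 1) (by omega)
  have hx_desc := isLeftDescent_alternatingWord_succ_mul cs hab hw'a hw'b (n := n) (by omega)
  have hy_desc := not_isLeftDescent_alternatingWord_mul cs hab hw'a hw'b hrm
  rw [nextLetter_add_two] at hy_desc
  refine ⟨hy ▸ h_ascent _ _ hx_ascent, h_cover _ _ _ hy ?_ ⟨_, hx_desc, hy_desc⟩⟩
  rw [hy, cs.not_isLeftDescent_iff.mp hx_ascent]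

/-- let `leL` be the left Kazhdan–Lusztig preorder `≤_L` (an arbitrary
reflexive transitive relation satisfying the two standard facts: `sy ≤_L y` whenever
`sy > y`, and `x ≤_L y` whenever `y = s x` covers `x` and some left descent of `x` is
not a left descent of `y`).  If `y` lies in a left `{a,b}`-string and the lower left
star `₍*₎y` is defined, then `y ∼_L ₍*₎y`.  Here the string element of coordinate `r`
is `π(alternatingWord a b r) * w'` where `ᴵy = w'` has no left descent in `{a,b}` and
`2 ≤ r ≤ m(a,b) − 1`. -/
theorem stmt11 {B W : Type*} [Group W] {M : CoxeterMatrix B} (cs : CoxeterSystem M W)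
    (leL : W → W → Prop)
    (hrefl : ∀ x, leL x x)
    (htrans : ∀ x y z, leL x y → leL y z → leL x z)
    (h1 : ∀ (x : W) (i : B), ¬ cs.IsLeftDescent x i → leL (cs.simple i * x) x)
    (h2 : ∀ (x y : W) (i : B), y = cs.simple i * x → cs.length y = cs.length x + 1 →
      (∃ j : B, cs.IsLeftDescent x j ∧ ¬ cs.IsLeftDescent y j) → leL x y)
    (a b : B) (hab : a ≠ b) (hm : 3 ≤ M a b)
    (w' : W) (hw'a : ¬ cs.IsLeftDescent w' a) (hw'b : ¬ cs.IsLeftDescent w' b)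
    (r : ℕ) (hr2 : 2 ≤ r) (hrm : r ≤ M a b - 1)
    (hlen : cs.length (cs.wordProd (alternatingWord a b r) * w') = r + cs.length w') :
    leL (cs.wordProd (alternatingWord a b r) * w')
        (cs.wordProd (alternatingWord a b (r - 1)) * w') ∧
    leL (cs.wordProd (alternatingWord a b (r - 1)) * w')
        (cs.wordProd (alternatingWord a b r) * w') :=
  stmt11_general cs leL h1 h2 a b hab w' hw'a hw'b r hr2 (.inl (by omega))
end
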